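/- Let p ≥ 5 be a prime and θ ∈ (0,π], and set e_n = 1 + p^n − 2·p^{n/2}·cos(nθ). Then for every n ≥ 1 the ratio e_n/e_1 lies in the interval [1, (1 + 2·p^{(n−1)/2}/sin(θ/2) − 1/sin(θ/2))²]. -/

import Mathlib

/-!
Let `z = √p e^{iθ}`, so that `e n = |1 - z ^ n| ^ 2`. Since `|z| ≥ 2`, for `n ≥ 2` we have
`|1 - z ^ n| ≥ |z| ^ n - 1 ≥ |z| + 1 ≥ |1 - z|`. Conversely, `|1 - z ^ n| ≤ 1 + |z| ^ n`, while
rotating `1 - z` by `e^{-iθ/2}` makes its imaginary part `-(1 + |z|) sin (θ / 2)`, whence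
`|1 - z| ≥ (1 + |z|) sin (θ / 2)`; and `(1 + |z| ^ n) / (1 + |z|) ≤ 2 |z| ^ (n - 1) - 1`.
-/

section Powers

variable {R : Type*} [CommRing R] [LinearOrder R] [IsStrictOrderedRing R]

theorem add_one_le_pow_sub_one {r : R} (hr : 2 ≤ r) {n : ℕ} (hn : 2 ≤ n) :
    r + 1 ≤ r ^ n - 1 := by
  have hpow : r ^ 2 ≤ r ^ n := pow_le_pow_right₀ (by linarith) hn
  nlinarith

theorem one_add_pow_succ_le {r : R} (hr : 1 ≤ r) (m : ℕ) :
    1 + r ^ (m + 1) ≤ (1 + r) * (2 * r ^ m - 1) := by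
  have hpow : 1 ≤ r ^ m := one_le_pow₀ hr
  have hdiff : 0 ≤ (r + 2) * (r ^ m - 1) := mul_nonneg (by linarith) (by linarith)
  linear_combination hdiff

end Powers

theorem norm_one_sub_le_norm_one_sub_pow {A : Type*} [NormedDivisionRing A] {z : A}
    (hz : 2 ≤ ‖z‖) {n : ℕ} (hn : n ≠ 0) : ‖1 - z‖ ≤ ‖1 - z ^ n‖ := by
  obtain rfl | hn2 : n = 1 ∨ 2 ≤ n := by omega
  · rw [pow_one]
  · calc ‖1 - z‖ ≤ ‖z‖ + 1 := by simpa [add_comm] using norm_sub_le 1 z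
      _ ≤ ‖z‖ ^ n - 1 := add_one_le_pow_sub_one hz hn2
      _ ≤ ‖1 - z ^ n‖ := by simpa [norm_sub_rev] using norm_sub_norm_le (z ^ n) 1

section Polar

open Complex (I exp)

theorem norm_one_sub_mul_exp_sq (r θ : ℝ) :
    ‖1 - r * exp (θ * I)‖ ^ 2 = 1 + r ^ 2 - 2 * r * Real.cos θ := by
  have hre : (1 - r * exp (θ * I)).re = 1 - r * Real.cos θ := by
    simp [Complex.exp_ofReal_mul_I_re]
  have him : (1 - r * exp (θ * I)).im = -(r * Real.sin θ) := by
    simp [Complex.exp_ofReal_mul_I_im]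
  rw [Complex.sq_norm, Complex.normSq_apply, hre, him]
  linear_combination r ^ 2 * Real.sin_sq_add_cos_sq θ

theorem abs_one_add_mul_sin_half_le_norm (r θ : ℝ) :
    |(1 + r) * Real.sin (θ / 2)| ≤ ‖1 - r * exp (θ * I)‖ := by
  have hcos : Real.cos θ = Real.cos (θ / 2) ^ 2 - Real.sin (θ / 2) ^ 2 := by
    rw [← Real.cos_two_mul', mul_div_cancel₀ θ two_ne_zero]
  refine abs_le_of_sq_le_sq ?_ (norm_nonneg _)
  calc ((1 + r) * Real.sin (θ / 2)) ^ 2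
      ≤ ((1 - r) * Real.cos (θ / 2)) ^ 2 + ((1 + r) * Real.sin (θ / 2)) ^ 2 :=
        le_add_of_nonneg_left (sq_nonneg _)
    _ = 1 + r ^ 2 - 2 * r * Real.cos θ := by
        rw [hcos]
        linear_combination (1 + r ^ 2) * Real.sin_sq_add_cos_sq (θ / 2)
    _ = ‖1 - r * exp (θ * I)‖ ^ 2 := (norm_one_sub_mul_exp_sq r θ).symm

theorem norm_one_sub_pow_succ_div_norm_one_sub_le {r θ : ℝ} (hr : 1 ≤ r)
    (hθ : 0 < Real.sin (θ / 2)) (m : ℕ) :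
    ‖1 - (r * exp (θ * I)) ^ (m + 1)‖ / ‖1 - r * exp (θ * I)‖ ≤
      (2 * r ^ m - 1) / Real.sin (θ / 2) := by
  have hr0 : 0 < 1 + r := by linarith
  have hnum : ‖1 - (r * exp (θ * I)) ^ (m + 1)‖ ≤ (1 + r) * (2 * r ^ m - 1) := by
    refine le_trans ?_ (one_add_pow_succ_le hr m)
    simpa [abs_of_nonneg (zero_le_one.trans hr)] using
      norm_sub_le 1 ((r * exp (θ * I)) ^ (m + 1))
  have hden : (1 + r) * Real.sin (θ / 2) ≤ ‖1 - r * exp (θ * I)‖ :=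
    (le_abs_self _).trans (abs_one_add_mul_sin_half_le_norm r θ)
  calc ‖1 - (r * exp (θ * I)) ^ (m + 1)‖ / ‖1 - r * exp (θ * I)‖
      ≤ (1 + r) * (2 * r ^ m - 1) / ((1 + r) * Real.sin (θ / 2)) :=
        div_le_div₀ ((norm_nonneg _).trans hnum) hnum (by positivity) hden
    _ = (2 * r ^ m - 1) / Real.sin (θ / 2) := mul_div_mul_left _ _ hr0.ne'

theorem norm_one_sub_sqrt_mul_exp_pow_sq {p : ℝ} (hp : 0 ≤ p) (θ : ℝ) (n : ℕ) :
    ‖1 - (√p * exp (θ * I)) ^ n‖ ^ 2 =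
      1 + p ^ n - 2 * p ^ ((n : ℝ) / 2) * Real.cos (n * θ) := by
  have hpolar : (√p * exp (θ * I)) ^ n = (√p ^ n : ℝ) * exp ((n * θ : ℝ) * I) := by
    rw [mul_pow, ← Complex.exp_nat_mul]
    push_cast
    rw [mul_assoc]
  rw [hpolar, norm_one_sub_mul_exp_sq, Real.rpow_div_two_eq_sqrt _ hp, Real.rpow_natCast,
    ← pow_mul, mul_comm n, pow_mul, Real.sq_sqrt hp]

theorem stmt_3_general (p : ℝ) (hp : 4 ≤ p) (θ : ℝ) (hθ : 0 < Real.sin (θ / 2)) (e : ℕ → ℝ)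
    (he : ∀ n : ℕ, e n = 1 + p ^ n - 2 * p ^ ((n : ℝ) / 2) * Real.cos (n * θ)) :
    ∀ n : ℕ, 1 ≤ n →
      e n / e 1 ∈ Set.Icc 1
        ((1 + 2 * p ^ (((n : ℝ) - 1) / 2) / Real.sin (θ / 2) - 1 / Real.sin (θ / 2)) ^ 2) := by
  intro n hn
  have hp0 : 0 ≤ p := by linarith
  have hsqrt : 2 ≤ √p := Real.le_sqrt_of_sq_le (by linarith)
  set z : ℂ := √p * exp (θ * I) with hz
  have hratio : e n / e 1 = (‖1 - z ^ n‖ / ‖1 - z‖) ^ 2 := by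
    rw [div_pow, he, he, ← norm_one_sub_sqrt_mul_exp_pow_sq hp0,
      ← norm_one_sub_sqrt_mul_exp_pow_sq hp0, pow_one]
  have hz_norm : 2 ≤ ‖z‖ := by simpa [hz, abs_of_nonneg (Real.sqrt_nonneg p)] using hsqrt
  have hz_pos : 0 < ‖1 - z‖ :=
    (abs_pos.2 (by positivity)).trans_le (abs_one_add_mul_sin_half_le_norm (√p) θ)
  rw [hratio]
  constructor
  · have hle : ‖1 - z‖ ≤ ‖1 - z ^ n‖ := norm_one_sub_le_norm_one_sub_pow hz_norm (by omega)
    exact one_le_pow₀ ((one_le_div hz_pos).2 hle)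
  · obtain ⟨m, rfl⟩ := Nat.exists_eq_add_of_le' hn
    rw [Nat.cast_add_one, add_sub_cancel_right, Real.rpow_div_two_eq_sqrt _ hp0,
      Real.rpow_natCast]
    gcongr
    calc ‖1 - z ^ (m + 1)‖ / ‖1 - z‖ ≤ (2 * √p ^ m - 1) / Real.sin (θ / 2) :=
          norm_one_sub_pow_succ_div_norm_one_sub_le (by linarith) hθ m
      _ ≤ 1 + 2 * √p ^ m / Real.sin (θ / 2) - 1 / Real.sin (θ / 2) := by
          rw [sub_div]
          linarith

end Polar

/-- Bound for the ratio `e n / e 1` in terms of `θ`. -/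
theorem stmt_3 (p : ℕ) (hp : p.Prime) (hp5 : 5 ≤ p) (θ : ℝ) (hθ : θ ∈ Set.Ioc 0 Real.pi)
    (e : ℕ → ℝ)
    (he : ∀ n : ℕ, e n = 1 + (p : ℝ) ^ n - 2 * (p : ℝ) ^ ((n : ℝ) / 2) * Real.cos (n * θ)) :
    ∀ n : ℕ, 1 ≤ n →
      e n / e 1 ∈ Set.Icc 1
        ((1 + 2 * (p : ℝ) ^ (((n : ℝ) - 1) / 2) / Real.sin (θ / 2)
            - 1 / Real.sin (θ / 2)) ^ 2) :=
  stmt_3_general p (by exact_mod_cast (show 4 ≤ p by omega)) θ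
    (Real.sin_pos_of_pos_of_lt_pi (by linarith [hθ.1]) (by linarith [hθ.1, hθ.2])) e he
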